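/- arXiv:2412.21125 — 5 statements merged into one kernel-verified Lean document; each statement's English description precedes it below -/
import Mathlib

section
/- Let X be a nonempty closed subset of ℝⁿ and let H be a hypothesis on X. Then: (i) every majorising e-class for H contains every maximal e-variable; (ii) an optimal e-class for H exists if and only if there exists a majorising e-class all of whose elements are maximal e-variables; and (iii) if an optimal e-class exists, it is unique and equals the set of all maximal e-variables. -/
open MeasureTheory Set ENNReal

noncomputable section

/-- The (topological) support of a Borel measure: the set of points all of whose open
neighbourhoods have positive measure. -/
def msupport {α : Type*} [TopologicalSpace α] [MeasurableSpace α]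
    (P : Measure α) : Set α :=
  {x | ∀ U : Set α, IsOpen U → x ∈ U → 0 < P U}

variable {α : Type*} [TopologicalSpace α] [MeasurableSpace α] {X : Set α} {m : ℕ}

/-- A hypothesis on `X`: a nonempty set of Borel probability measures (on `X`,
identified with the Borel probability measures supported in `X`). -/
def IsHypothesis (H : Set (Measure X)) : Prop :=
  H.Nonempty ∧ ∀ P ∈ H, IsProbabilityMeasure P

/-- An e-variable with respect to `H`: a Borel measurable nonnegative function whose
expectation is at most one under every `P ∈ H`. -/
def IsEVar (H : Set (Measure X)) (E : X → ℝ) : Prop :=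
  Measurable E ∧ (∀ x, 0 ≤ E x) ∧ ∀ P ∈ H, ∫⁻ x, ENNReal.ofReal (E x) ∂P ≤ 1

/-- `f` majorises `g` if `f(x) ≥ g(x)` for every `x ∈ X`. -/
def Majorises (f g : X → ℝ) : Prop := ∀ x, g x ≤ f x

/-- A maximal e-variable: an e-variable with no strict majoriser among e-variables. -/
def IsMaximalEVar (H : Set (Measure X)) (E : X → ℝ) : Prop :=
  IsEVar H E ∧ ¬ ∃ E', IsEVar H E' ∧ Majorises E' E ∧ E' ≠ E

/-- A majorising e-class: an e-class such that every e-variable is majorised by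
one of its elements. -/
def IsMajorisingClass (H : Set (Measure X)) (C : Set (X → ℝ)) : Prop :=
  (∀ E ∈ C, IsEVar H E) ∧ ∀ E, IsEVar H E → ∃ E' ∈ C, Majorises E' E

/-- The optimal e-class: a majorising e-class contained in every majorising e-class. -/
def IsOptimalClass (H : Set (Measure X)) (C : Set (X → ℝ)) : Prop :=
  IsMajorisingClass H C ∧ ∀ C', IsMajorisingClass H C' → C ⊆ C'

/-- `P ∈ P_Φ`: the expectation of the ℓ¹-norm of `Φ` under `P` is finite. -/
def MemPPhi (P : Measure X) (Φ : X → Fin m → ℝ) : Prop :=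
  ∫⁻ x, ENNReal.ofReal (∑ i, |Φ x i|) ∂P < ⊤

/-- `Φ` is a constraint for `H`: `Φ` is continuous and `H` is exactly the set of Borel
probability measures `P ∈ P_Φ` with `⟨P, Φ⟩ = 0`. -/
def IsConstraint (H : Set (Measure X)) (Φ : X → Fin m → ℝ) : Prop :=
  Continuous Φ ∧
    H = {P : Measure X | IsProbabilityMeasure P ∧ MemPPhi P Φ ∧ ∫ x, Φ x ∂P = 0}

/-- A proper constraint: a constraint such that `0` lies in the relative interior
of the convex hull of the image of `Φ`. -/
def IsProperConstraint (H : Set (Measure X)) (Φ : X → Fin m → ℝ) : Prop :=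
  IsConstraint H Φ ∧
    (0 : Fin m → ℝ) ∈ intrinsicInterior ℝ (convexHull ℝ (Set.range Φ))

/-- A minimal constraint: a constraint such that `0` lies in the interior
of the convex hull of the image of `Φ`. -/
def IsMinimalConstraint (H : Set (Measure X)) (Φ : X → Fin m → ℝ) : Prop :=
  IsConstraint H Φ ∧
    (0 : Fin m → ℝ) ∈ interior (convexHull ℝ (Set.range Φ))

/-- A finitely constrained hypothesis: one admitting a constraint. -/
def FinitelyConstrained (H : Set (Measure X)) : Prop :=
  ∃ (m : ℕ) (Φ : X → Fin m → ℝ), IsConstraint H Φ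

/-- A properly constrained hypothesis: one admitting a proper constraint. -/
def ProperlyConstrained (H : Set (Measure X)) : Prop :=
  ∃ (m : ℕ) (Φ : X → Fin m → ℝ), IsProperConstraint H Φ

/-- `Λ_{Φ|S} = {λ ∈ ℝᵐ : sup_{x ∈ S} λ·Φ(x) ≤ 1}`. -/
def LambdaSet (Φ : X → Fin m → ℝ) (S : Set X) : Set (Fin m → ℝ) :=
  {l | ∀ x ∈ S, ∑ i, l i * Φ x i ≤ 1}

/-- The dual e-class `E_H^∨ = {1 - λ·Φ : λ ∈ Λ_Φ}`. -/
def dualClass (Φ : X → Fin m → ℝ) : Set (X → ℝ) :=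
  {E | ∃ l ∈ LambdaSet Φ Set.univ, E = fun x => 1 - ∑ i, l i * Φ x i}

/-- A matching set for `H`: a closed set that is exactly the support of some `P ∈ H`. -/
def IsMatchingSet (H : Set (Measure X)) (S : Set X) : Prop :=
  IsClosed S ∧ ∃ P ∈ H, msupport P = S

end

/-!
Majorisation is the pointwise order, so an e-class is majorising precisely when it is a cofinal
subset of the set of e-variables, and it is optimal precisely when it is the least such subset. A
cofinal subset cannot avoid a maximal element, but it can spare any non-maximal `a`: if `a < b`,
whatever lies below `a` also lies below an element of the subset above `b`. Hence a cofinal subset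
is the least one if and only if all its elements are maximal.
-/

section Order

variable {β : Type*} {s t : Set β} {a b : β}

theorem mem_of_maximal_of_isCofinalFor [PartialOrder β] (ha : Maximal (· ∈ s) a)
    (ht : IsCofinalFor s t) (hts : t ⊆ s) : a ∈ t := by
  obtain ⟨b, hb, hab⟩ := ht ha.prop
  rwa [ha.eq_of_le (hts hb) hab]

theorem isCofinalFor_sdiff_singleton_of_lt [Preorder β] (ht : IsCofinalFor s t)
    (hb : b ∈ s) (hab : a < b) : IsCofinalFor s (t \ {a}) := by
  intro x hx
  obtain ⟨y, hy, hxy⟩ := ht hx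
  obtain rfl | hya := eq_or_ne y a
  · obtain ⟨c, hc, hbc⟩ := ht hb
    have hyc : y < c := hab.trans_le hbc
    exact ⟨c, ⟨hc, hyc.ne'⟩, hxy.trans hyc.le⟩
  · exact ⟨y, ⟨hy, hya⟩, hxy⟩

theorem maximal_of_isLeast_isCofinalFor [Preorder β]
    (ht : IsLeast {t | t ⊆ s ∧ IsCofinalFor s t} t) (ha : a ∈ t) : Maximal (· ∈ s) a := by
  obtain ⟨⟨hts, hcof⟩, hleast⟩ := ht
  by_contra hmax
  obtain ⟨b, hab, hb⟩ := (not_maximal_iff_exists_gt (hts ha)).1 hmax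
  have hsub : t ⊆ t \ {a} :=
    hleast ⟨sdiff_subset.trans hts, isCofinalFor_sdiff_singleton_of_lt hcof hb hab⟩
  exact (hsub ha).2 rfl

theorem isLeast_isCofinalFor_iff_forall_maximal [PartialOrder β] :
    IsLeast {t | t ⊆ s ∧ IsCofinalFor s t} t ↔
      (t ⊆ s ∧ IsCofinalFor s t) ∧ ∀ a ∈ t, Maximal (· ∈ s) a :=
  ⟨fun ht => ⟨ht.1, fun _ => maximal_of_isLeast_isCofinalFor ht⟩,
    fun ⟨ht, hmax⟩ => ⟨ht, fun _ hu _ ha => mem_of_maximal_of_isCofinalFor (hmax _ ha) hu.2 hu.1⟩⟩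

theorem eq_setOf_maximal_of_isLeast_isCofinalFor [PartialOrder β]
    (ht : IsLeast {t | t ⊆ s ∧ IsCofinalFor s t} t) : t = {a | Maximal (· ∈ s) a} :=
  Subset.antisymm (fun _ => maximal_of_isLeast_isCofinalFor ht)
    fun _ ha => mem_of_maximal_of_isCofinalFor ha ht.1.2 ht.1.1

end Order

section EVariables

variable {α : Type*} [MeasurableSpace α] {X : Set α} {H : Set (Measure X)}
  {C : Set (X → ℝ)} {E : X → ℝ}

theorem isMaximalEVar_iff_maximal :
    IsMaximalEVar H E ↔ Maximal (· ∈ {E | IsEVar H E}) E := by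
  rw [maximal_iff]
  refine and_congr_right fun _ => ⟨fun hmax F hF hEF => ?_, fun hmax ⟨F, hF, hEF, hne⟩ => ?_⟩
  · by_contra hne
    exact hmax ⟨F, hF, hEF, Ne.symm hne⟩
  · exact hne (hmax hF hEF).symm

theorem isMajorisingClass_iff_isCofinalFor :
    IsMajorisingClass H C ↔ C ⊆ {E | IsEVar H E} ∧ IsCofinalFor {E | IsEVar H E} C :=
  Iff.rfl

theorem isOptimalClass_iff_isLeast :
    IsOptimalClass H C ↔
      IsLeast {C | C ⊆ {E | IsEVar H E} ∧ IsCofinalFor {E | IsEVar H E} C} C :=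
  Iff.rfl

end EVariables

theorem statement0_general {α : Type*} [MeasurableSpace α] {X : Set α} (H : Set (Measure X)) :
    (∀ C : Set (X → ℝ), IsMajorisingClass H C →
        ∀ E : X → ℝ, IsMaximalEVar H E → E ∈ C) ∧
    ((∃ C, IsOptimalClass H C) ↔
        ∃ C, IsMajorisingClass H C ∧ ∀ E ∈ C, IsMaximalEVar H E) ∧
    (∀ C, IsOptimalClass H C → C = {E | IsMaximalEVar H E}) := by
  simp only [isOptimalClass_iff_isLeast, isMajorisingClass_iff_isCofinalFor,
    isMaximalEVar_iff_maximal]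
  exact ⟨fun _ hC _ hE => mem_of_maximal_of_isCofinalFor hE hC.2 hC.1,
    exists_congr fun _ => isLeast_isCofinalFor_iff_forall_maximal,
    fun _ => eq_setOf_maximal_of_isLeast_isCofinalFor⟩

/-- (i) every majorising e-class contains every maximal e-variable;
(ii) an optimal e-class exists iff there is a majorising e-class whose elements are all
maximal; (iii) any optimal e-class equals the set of all maximal e-variables
(and is hence unique). -/
theorem statement0 {n : ℕ} {X : Set (EuclideanSpace ℝ (Fin n))}
    (hXc : IsClosed X) (hXne : X.Nonempty)
    (H : Set (Measure X)) (hH : IsHypothesis H) :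
    (∀ C : Set (X → ℝ), IsMajorisingClass H C →
        ∀ E : X → ℝ, IsMaximalEVar H E → E ∈ C) ∧
    ((∃ C, IsOptimalClass H C) ↔
        ∃ C, IsMajorisingClass H C ∧ ∀ E ∈ C, IsMaximalEVar H E) ∧
    (∀ C, IsOptimalClass H C → C = {E | IsMaximalEVar H E}) :=
  statement0_general H
end

section
/- Let X be a nonempty closed subset of ℝⁿ and H a hypothesis on X. If there exists a point x₀ ∈ X such that sup_{P ∈ H} P({x₀}) = 0, then no optimal e-class for H exists. -/
open MeasureTheory Set ENNReal

/-! Adding to an e-variable the indicator of a nonempty measurable set that is null under every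
`P ∈ H` changes no expectation, so no e-variable is maximal. On the other hand, a non-maximal
element can be removed from any majorising class, so every element of an optimal class is maximal,
and an optimal class has elements because it majorises the zero e-variable. -/

section

variable {α : Type*} {X : Set α}

theorem Majorises.trans {f g h : X → ℝ} (hfg : Majorises f g) (hgh : Majorises g h) :
    Majorises f h :=
  fun x ↦ (hgh x).trans (hfg x)

theorem Majorises.antisymm {f g : X → ℝ} (hfg : Majorises f g) (hgf : Majorises g f) : f = g :=
  funext fun x ↦ (hgf x).antisymm (hfg x)

variable [MeasurableSpace α] {H : Set (Measure X)} {C : Set (X → ℝ)} {E F : X → ℝ} {A : Set X}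

theorem isEVar_zero : IsEVar H 0 :=
  ⟨measurable_zero, fun _ ↦ le_rfl, fun P _ ↦ by simp⟩

theorem IsEVar.congr_ae (hE : IsEVar H E) (hFm : Measurable F) (hF : ∀ x, 0 ≤ F x)
    (hFE : ∀ P ∈ H, F =ᵐ[P] E) : IsEVar H F := by
  refine ⟨hFm, hF, fun P hP ↦ ?_⟩
  calc ∫⁻ x, ENNReal.ofReal (F x) ∂P
      = ∫⁻ x, ENNReal.ofReal (E x) ∂P := lintegral_congr_ae ((hFE P hP).fun_comp ENNReal.ofReal)
    _ ≤ 1 := hE.2.2 P hP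

theorem IsEVar.add_indicator_one (hE : IsEVar H E) (hA : MeasurableSet A)
    (hnull : ∀ P ∈ H, P A = 0) : IsEVar H (E + A.indicator 1) := by
  refine hE.congr_ae (hE.1.add (measurable_one.indicator hA))
    (fun x ↦ add_nonneg (hE.2.1 x) (indicator_nonneg (fun _ _ ↦ zero_le_one) x)) fun P hP ↦ ?_
  simpa using (ae_eq_refl E).add (indicator_meas_zero (f := (1 : X → ℝ)) (hnull P hP))

theorem not_isMaximalEVar_of_null (hA : MeasurableSet A) (hne : A.Nonempty)
    (hnull : ∀ P ∈ H, P A = 0) : ¬ IsMaximalEVar H E := by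
  rintro ⟨hE, hmax⟩
  refine hmax ⟨E + A.indicator 1, hE.add_indicator_one hA hnull, fun x ↦ ?_, fun h ↦ ?_⟩
  · exact le_add_of_nonneg_right (indicator_nonneg (fun _ _ ↦ zero_le_one) x)
  · obtain ⟨x, hx⟩ := hne
    simpa [hx] using congrFun h x

theorem IsMajorisingClass.nonempty (hC : IsMajorisingClass H C) : C.Nonempty :=
  let ⟨E, hE, _⟩ := hC.2 0 isEVar_zero
  ⟨E, hE⟩

theorem IsMajorisingClass.diff_singleton (hC : IsMajorisingClass H C)
    (hE : ¬ IsMaximalEVar H E) : IsMajorisingClass H (C \ {E}) := by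
  refine ⟨fun F hF ↦ hC.1 F hF.1, fun F hF ↦ ?_⟩
  obtain ⟨G, hGC, hGF⟩ := hC.2 F hF
  by_cases hGE : G = E
  · subst hGE
    obtain ⟨E', hE', hE'G, hne⟩ : ∃ E', IsEVar H E' ∧ Majorises E' G ∧ E' ≠ G :=
      not_not.mp fun h ↦ hE ⟨hC.1 G hGC, h⟩
    obtain ⟨G', hG'C, hG'E'⟩ := hC.2 E' hE'
    have hG'G : G' ≠ G := by
      rintro rfl
      exact hne (hE'G.antisymm hG'E')
    exact ⟨G', ⟨hG'C, hG'G⟩, (hG'E'.trans hE'G).trans hGF⟩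
  · exact ⟨G, ⟨hGC, hGE⟩, hGF⟩

theorem IsOptimalClass.isMaximalEVar (hC : IsOptimalClass H C) (hE : E ∈ C) :
    IsMaximalEVar H E := by
  by_contra hmax
  exact (hC.2 _ (hC.1.diff_singleton hmax) hE).2 rfl

theorem statement1_general (hA : MeasurableSet A) (hne : A.Nonempty)
    (hnull : (⨆ P ∈ H, P A) = 0) : ¬ ∃ C, IsOptimalClass H C := by
  rintro ⟨C, hC⟩
  obtain ⟨E, hE⟩ := hC.1.nonempty
  have hnull' : ∀ P ∈ H, P A = 0 := by simpa only [ENNReal.iSup_eq_zero] using hnull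
  exact not_isMaximalEVar_of_null hA hne hnull' (hC.isMaximalEVar hE)

end

/-- if some `x₀ ∈ X` has `sup_{P ∈ H} P({x₀}) = 0`, then no optimal
e-class for `H` exists. -/
theorem statement1 {n : ℕ} {X : Set (EuclideanSpace ℝ (Fin n))}
    (hXc : IsClosed X) (hXne : X.Nonempty)
    (H : Set (Measure X)) (hH : IsHypothesis H)
    (hx : ∃ x₀ : X, (⨆ P ∈ H, P {x₀}) = 0) :
    ¬ ∃ C, IsOptimalClass H C := by
  obtain ⟨x₀, hx₀⟩ := hx
  exact statement1_general (measurableSet_singleton x₀) (singleton_nonempty x₀) hx₀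
end

section
/- Let X be a nonempty closed subset of ℝⁿ and H a finitely constrained hypothesis on X. Then H is properly constrained if and only if sup_{P ∈ H} P({x}) > 0 for every x ∈ X. Moreover, if H is properly constrained, then every constraint for H is a proper constraint, and there exists a function A : X → [1,∞) such that E(x) ≤ A(x) for every e-variable E ∈ E_H and every x ∈ X. -/
open MeasureTheory Set ENNReal

/-!
A probability measure with mean zero under `Φ` kills every linear functional that is nonpositive
on `Φ(X)`: such a functional vanishes at each atom of the measure. So if every point of `X` is an
atom of some member of `H`, no hyperplane through `0` properly supports the convex hull of `Φ(X)`,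
which means that `0` is in its relative interior. Conversely, if `0` is in the relative interior,
the segment from `Φ x` to `0` can be prolonged within the hull to some `z`, and mixing the Dirac
mass at `x` with a measure of mean `z` gives a member of `H` with an atom at `x`. An atom of mass
`p` at `x` bounds every e-variable at `x` by `1 / p`.
-/

open scoped Topology NNReal

section RelativeInterior

theorem mem_intrinsicInterior_iff_mem_nhdsWithin {𝕜 V Q : Type*} [Ring 𝕜] [AddCommGroup V]
    [Module 𝕜 V] [TopologicalSpace Q] [AddTorsor V Q] {C : Set Q} {x : Q} :
    x ∈ intrinsicInterior 𝕜 C ↔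
      x ∈ affineSpan 𝕜 C ∧ C ∈ 𝓝[(affineSpan 𝕜 C : Set Q)] x := by
  simp only [mem_intrinsicInterior, mem_interior_iff_mem_nhds]
  constructor
  · rintro ⟨y, hy, rfl⟩
    exact ⟨y.2, preimage_coe_mem_nhds_subtype.1 hy⟩
  · rintro ⟨hx, hC⟩
    exact ⟨⟨x, hx⟩, preimage_coe_mem_nhds_subtype.2 hC, rfl⟩

theorem exists_mem_openSegment_of_mem_intrinsicInterior {E : Type*} [AddCommGroup E] [Module ℝ E]
    [TopologicalSpace E] [IsTopologicalAddGroup E] [ContinuousSMul ℝ E] {C : Set E} {x y : E}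
    (hx : x ∈ intrinsicInterior ℝ C) (hy : y ∈ affineSpan ℝ C) :
    ∃ z ∈ C, x ∈ openSegment ℝ y z := by
  obtain ⟨hxC, hC⟩ := mem_intrinsicInterior_iff_mem_nhdsWithin.1 hx
  have hline : Filter.Tendsto (AffineMap.lineMap x y : ℝ → E) (𝓝 0)
      (𝓝[(affineSpan ℝ C : Set E)] x) := by
    refine tendsto_nhdsWithin_iff.2
      ⟨?_, Filter.Eventually.of_forall fun t => AffineMap.lineMap_mem t hxC hy⟩
    simpa using (AffineMap.lineMap_continuous (p := x) (q := y)).tendsto (0 : ℝ)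
  obtain ⟨t, htC, ht⟩ : ∃ t : ℝ, AffineMap.lineMap x y t ∈ C ∧ t < 0 :=
    ((hline.eventually hC).filter_mono nhdsWithin_le_nhds |>.and
      (self_mem_nhdsWithin (s := Iio (0 : ℝ)))).exists
  have h1t : 0 < 1 - t := by linarith
  refine ⟨_, htC, -t / (1 - t), 1 / (1 - t), div_pos (neg_pos.2 ht) h1t, by positivity, ?_, ?_⟩
  · field_simp
    ring
  · rw [AffineMap.lineMap_apply_module]
    match_scalars
    · field_simp
      ring
    · field_simp

variable {E : Type*} [NormedAddCommGroup E] [NormedSpace ℝ E] [FiniteDimensional ℝ E]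
  {C : Set E} {x : E}

theorem exists_ne_zero_forall_le_of_notMem_interior (hC : Convex ℝ C) (hne : C.Nonempty)
    (hx : x ∉ interior C) : ∃ f : StrongDual ℝ E, f ≠ 0 ∧ ∀ a ∈ C, f a ≤ f x := by
  by_cases hint : (interior C).Nonempty
  · exact geometric_hahn_banach_of_nonempty_interior_point hC hx hint
  obtain ⟨c, hc⟩ := hne
  have hspan : vectorSpan ℝ C ≠ ⊤ := by
    rwa [hC.interior_nonempty_iff_affineSpan_eq_top,
      AffineSubspace.affineSpan_eq_top_iff_vectorSpan_eq_top_of_nonempty ℝ E E ⟨c, hc⟩] at hint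
  obtain ⟨f, hf0, hf⟩ := (vectorSpan ℝ C).exists_le_ker_of_lt_top hspan.lt_top
  have hconst : ∀ a ∈ C, f a = f c := fun a ha =>
    sub_eq_zero.1 <| by simpa using hf (vsub_mem_vectorSpan ℝ ha hc)
  have hF0 : LinearMap.toContinuousLinearMap f ≠ 0 := by simpa using hf0
  rcases le_total (f c) (f x) with h | h
  · exact ⟨LinearMap.toContinuousLinearMap f, hF0, fun a ha => by simpa [hconst a ha] using h⟩
  · exact ⟨-LinearMap.toContinuousLinearMap f, neg_ne_zero.2 hF0,
      fun a ha => by simpa [hconst a ha] using h⟩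

theorem exists_forall_le_and_exists_lt_of_notMem_intrinsicInterior (hC : Convex ℝ C)
    (hne : C.Nonempty) (hx : x ∉ intrinsicInterior ℝ C) :
    ∃ f : StrongDual ℝ E, (∀ a ∈ C, f a ≤ f x) ∧ ∃ a ∈ C, f a < f x := by
  let V := Submodule.span ℝ ((· - x) '' C)
  have hV : ∀ a ∈ C, a - x ∈ V := fun a ha => Submodule.subset_span ⟨a, ha, rfl⟩
  let φ : V →ᵃⁱ[ℝ] E :=
    (AffineIsometryEquiv.vaddConst ℝ x).toAffineIsometry.comp V.subtypeₗᵢ.toAffineIsometry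
  have hφ : ∀ v : V, φ v = v + x := fun _ => rfl
  have hφC : φ '' (φ ⁻¹' C) = C :=
    image_preimage_eq_of_subset fun a ha => ⟨⟨a - x, hV a ha⟩, by simp [hφ]⟩
  have h0 : (0 : V) ∉ interior (φ ⁻¹' C) := fun h => hx <| by
    rw [← hφC, φ.intrinsicInterior_image]
    exact ⟨0, interior_subset_intrinsicInterior h, by simp [hφ]⟩
  obtain ⟨f, hf0, hf⟩ := exists_ne_zero_forall_le_of_notMem_interior
    (hC.affine_preimage φ.toAffineMap) (image_nonempty.1 (hφC.symm ▸ hne)) h0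
  obtain ⟨g, hg, -⟩ := exists_extension_norm_eq V f
  have hle : ∀ a ∈ C, g a ≤ g x := fun a ha => by
    simpa [← hg] using hf ⟨a - x, hV a ha⟩ (by simpa [hφ] using ha)
  refine ⟨g, hle, ?_⟩
  by_contra! hge
  have hker : V ≤ LinearMap.ker g.toLinearMap := Submodule.span_le.2 <| by
    rintro _ ⟨a, ha, rfl⟩
    simpa [sub_eq_zero] using (hle a ha).antisymm (hge a ha)
  exact hf0 <| ContinuousLinearMap.ext fun v => (hg v).symm.trans (hker v.2)

end RelativeInterior

section Mean

variable {Ω E : Type*} [MeasurableSpace Ω] [NormedAddCommGroup E] [NormedSpace ℝ E]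
  {P Q : Measure Ω} {Φ : Ω → E} {e e' : E}

/-- `P` is a probability measure under which `Φ` has a (Bochner) expectation, equal to `e`.
Integrability is part of the notion, so that the integral is not a junk value. -/
structure HasMean (P : Measure Ω) (Φ : Ω → E) (e : E) : Prop where
  isProbabilityMeasure : IsProbabilityMeasure P
  integrable : Integrable Φ P
  integral_eq : ∫ ω, Φ ω ∂P = e

namespace HasMean

theorem dirac [CompleteSpace E] (hΦ : StronglyMeasurable Φ) (ω : Ω) :
    HasMean (Measure.dirac ω) Φ (Φ ω) :=
  ⟨inferInstance, integrable_dirac' hΦ enorm_lt_top, integral_dirac' Φ ω hΦ⟩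

theorem smul_add_smul (hP : HasMean P Φ e) (hQ : HasMean Q Φ e') {a b : ℝ≥0} (hab : a + b = 1) :
    HasMean (a • P + b • Q) Φ (a • e + b • e') := by
  obtain ⟨_, hPi, rfl⟩ := hP
  obtain ⟨_, hQi, rfl⟩ := hQ
  have hPa : Integrable Φ (a • P) := hPi.smul_measure_nnreal
  have hQb : Integrable Φ (b • Q) := hQi.smul_measure_nnreal
  refine ⟨⟨by simp [← ENNReal.coe_add, hab]⟩, hPa.add_measure hQb, ?_⟩
  rw [integral_add_measure hPa hQb, integral_smul_nnreal_measure, integral_smul_nnreal_measure]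

theorem convex_setOf_exists (Φ : Ω → E) : Convex ℝ {e | ∃ P : Measure Ω, HasMean P Φ e} := by
  rintro e ⟨P, hP⟩ e' ⟨Q, hQ⟩ a b ha hb hab
  lift a to ℝ≥0 using ha
  lift b to ℝ≥0 using hb
  exact ⟨_, hP.smul_add_smul hQ (by exact_mod_cast hab)⟩

theorem exists_of_mem_convexHull [CompleteSpace E] (hΦ : StronglyMeasurable Φ)
    (he : e ∈ convexHull ℝ (range Φ)) : ∃ P : Measure Ω, HasMean P Φ e :=
  have hrange : range Φ ⊆ {e | ∃ P : Measure Ω, HasMean P Φ e} :=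
    range_subset_iff.2 fun ω => ⟨_, dirac hΦ ω⟩
  convexHull_min hrange (convex_setOf_exists Φ) he

theorem exists_pos_singleton_of_mem_intrinsicInterior [CompleteSpace E]
    (hΦ : StronglyMeasurable Φ) (he : e ∈ intrinsicInterior ℝ (convexHull ℝ (range Φ))) (ω : Ω) :
    ∃ P : Measure Ω, HasMean P Φ e ∧ 0 < P {ω} := by
  have hω : Φ ω ∈ affineSpan ℝ (convexHull ℝ (range Φ)) :=
    subset_affineSpan ℝ _ (subset_convexHull ℝ _ (mem_range_self ω))
  obtain ⟨z, hz, a, b, ha, hb, hab, rfl⟩ := exists_mem_openSegment_of_mem_intrinsicInterior he hω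
  obtain ⟨Q, hQ⟩ := exists_of_mem_convexHull hΦ hz
  lift a to ℝ≥0 using ha.le
  lift b to ℝ≥0 using hb.le
  refine ⟨_, (dirac hΦ ω).smul_add_smul hQ (by exact_mod_cast hab), ?_⟩
  have hdirac : Measure.dirac ω {ω} ≠ 0 := by simp
  have ha' : (a : ℝ≥0∞) ≠ 0 := by exact_mod_cast ha.ne'
  exact (ENNReal.mul_pos ha' hdirac).trans_le (le_self_add (α := ℝ≥0∞))

theorem apply_eq_of_forall_le_of_pos_singleton [CompleteSpace E] (hP : HasMean P Φ e)
    (f : StrongDual ℝ E) (hf : ∀ ω, f (Φ ω) ≤ f e) {ω : Ω} (hω : 0 < P {ω}) : f (Φ ω) = f e := by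
  obtain ⟨_, hint, rfl⟩ := hP
  set e := ∫ ω, Φ ω ∂P with he
  have hmean : ∫ ω, (f e - f (Φ ω)) ∂P = 0 := by
    rw [integral_sub (integrable_const _) (f.integrable_comp hint), f.integral_comp_comm hint, ← he]
    simp
  have hae : ∀ᵐ ω ∂P, f e - f (Φ ω) = 0 :=
    (integral_eq_zero_iff_of_nonneg (fun ω => sub_nonneg.2 (hf ω))
      ((integrable_const _).sub (f.integrable_comp hint))).1 hmean
  by_contra hne
  refine hω.ne' (measure_mono_null (singleton_subset_iff.2 ?_) (ae_iff.1 hae))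
  exact fun h => hne (sub_eq_zero.1 h).symm

end HasMean

theorem mem_intrinsicInterior_convexHull_range_iff [FiniteDimensional ℝ E] [Nonempty Ω]
    (hΦ : StronglyMeasurable Φ) :
    e ∈ intrinsicInterior ℝ (convexHull ℝ (range Φ)) ↔
      ∀ ω, ∃ P : Measure Ω, HasMean P Φ e ∧ 0 < P {ω} := by
  have := FiniteDimensional.complete ℝ E
  refine ⟨HasMean.exists_pos_singleton_of_mem_intrinsicInterior hΦ, fun h => ?_⟩
  by_contra he
  obtain ⟨f, hle, a, ha, hlt⟩ := exists_forall_le_and_exists_lt_of_notMem_intrinsicInterior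
    (convex_convexHull ℝ _) (range_nonempty Φ).convexHull he
  have hΦf : range Φ ⊆ {y | f y = f e} := range_subset_iff.2 fun ω => by
    obtain ⟨P, hP, hω⟩ := h ω
    exact hP.apply_eq_of_forall_le_of_pos_singleton f
      (fun ω' => hle _ (subset_convexHull ℝ _ (mem_range_self ω'))) hω
  exact hlt.ne (convexHull_min hΦf (convex_hyperplane f.isLinear (f e)) ha)

end Mean

section Hypotheses

variable {α : Type*} [MeasurableSpace α] {X : Set α} {H : Set (Measure X)}

theorem IsEVar.le_inv_measureReal_singleton {E : X → ℝ} (hE : IsEVar H E) {P : Measure X}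
    [IsFiniteMeasure P] (hP : P ∈ H) {x : X} (hx : 0 < P {x}) : E x ≤ (P.real {x})⁻¹ := by
  obtain ⟨hmeas, hnonneg, hmean⟩ := hE
  have hmarkov : ENNReal.ofReal (E x) * P {x} ≤ 1 := calc
    ENNReal.ofReal (E x) * P {x}
      ≤ ENNReal.ofReal (E x) * P {y | ENNReal.ofReal (E x) ≤ ENNReal.ofReal (E y)} := by
        gcongr
        simp
    _ ≤ ∫⁻ y, ENNReal.ofReal (E y) ∂P := mul_meas_ge_le_lintegral hmeas.ennreal_ofReal _
    _ ≤ 1 := hmean P hP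
  have hreal : E x * P.real {x} ≤ 1 := by
    simpa [hnonneg x, Measure.real] using ENNReal.toReal_mono one_ne_top hmarkov
  rw [← one_div]
  exact (le_div_iff₀ (ENNReal.toReal_pos hx.ne' (measure_ne_top P _))).2 hreal

theorem exists_forall_isEVar_le (hprob : ∀ P ∈ H, IsProbabilityMeasure P)
    (hatom : ∀ x, ∃ P ∈ H, 0 < P {x}) :
    ∃ A : X → ℝ, (∀ x, 1 ≤ A x) ∧ ∀ E : X → ℝ, IsEVar H E → ∀ x, E x ≤ A x := by
  choose P hPH hpos using hatom
  have (x : X) : IsProbabilityMeasure (P x) := hprob _ (hPH x)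
  have hreal (x : X) : 0 < (P x).real {x} := ENNReal.toReal_pos (hpos x).ne' (measure_ne_top _ _)
  exact ⟨fun x => ((P x).real {x})⁻¹, fun x => (one_le_inv₀ (hreal x)).2 measureReal_le_one,
    fun E hE x => hE.le_inv_measureReal_singleton (hPH x) (hpos x)⟩

variable [TopologicalSpace α]

theorem FinitelyConstrained.isProbabilityMeasure (hH : FinitelyConstrained H) {P : Measure X}
    (hP : P ∈ H) : IsProbabilityMeasure P := by
  obtain ⟨m, Φ, -, rfl⟩ := hH
  exact hP.1

variable [OpensMeasurableSpace α] {m : ℕ} {Φ : X → Fin m → ℝ}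

theorem memPPhi_iff_integrable {P : Measure X} (hΦ : Continuous Φ) :
    MemPPhi P Φ ↔ Integrable Φ P := by
  have hsum : Continuous fun x => ∑ i, |Φ x i| := by fun_prop
  have hnonneg : ∀ x, 0 ≤ ∑ i, |Φ x i| := fun x => Finset.sum_nonneg fun i _ => abs_nonneg _
  have hint : MemPPhi P Φ ↔ Integrable (fun x => ∑ i, |Φ x i|) P := by
    rw [Integrable, and_iff_right hsum.aestronglyMeasurable,
      hasFiniteIntegral_iff_ofReal (ae_of_all _ hnonneg), MemPPhi]
  rw [hint]
  refine ⟨fun h => Integrable.of_eval fun i => ?_,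
    fun h => integrable_finsetSum _ fun i _ => (h.eval i).abs⟩
  refine h.mono (by fun_prop) (ae_of_all _ fun x => ?_)
  rw [Real.norm_of_nonneg (hnonneg x)]
  exact Finset.single_le_sum (f := fun i => |Φ x i|) (fun i _ => abs_nonneg _) (Finset.mem_univ i)

namespace IsConstraint

theorem mem_iff_hasMean_zero (hΦ : IsConstraint H Φ) {P : Measure X} :
    P ∈ H ↔ HasMean P Φ 0 := by
  rw [hΦ.2, mem_ofPred_eq, memPPhi_iff_integrable hΦ.1]
  exact ⟨fun ⟨hprob, hint, h0⟩ => ⟨hprob, hint, h0⟩, fun ⟨hprob, hint, h0⟩ => ⟨hprob, hint, h0⟩⟩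

theorem isProperConstraint_iff [Nonempty X] (hΦ : IsConstraint H Φ) :
    IsProperConstraint H Φ ↔ ∀ x, ∃ P ∈ H, 0 < P {x} := by
  simp only [IsProperConstraint, hΦ, true_and, hΦ.mem_iff_hasMean_zero,
    mem_intrinsicInterior_convexHull_range_iff hΦ.1.stronglyMeasurable]

end IsConstraint

theorem FinitelyConstrained.properlyConstrained_iff [Nonempty X] (hH : FinitelyConstrained H) :
    ProperlyConstrained H ↔ ∀ x, ∃ P ∈ H, 0 < P {x} := by
  obtain ⟨m, Φ, hΦ⟩ := hH
  exact ⟨fun ⟨_, _, hΨ⟩ => hΨ.1.isProperConstraint_iff.1 hΨ,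
    fun h => ⟨m, Φ, hΦ.isProperConstraint_iff.2 h⟩⟩

theorem statement5_general (hX : X.Nonempty) (hH : FinitelyConstrained H) :
    (ProperlyConstrained H ↔ ∀ x : X, 0 < ⨆ P ∈ H, P {x}) ∧
    (ProperlyConstrained H →
      (∀ (m : ℕ) (Φ : X → Fin m → ℝ), IsConstraint H Φ → IsProperConstraint H Φ) ∧
      ∃ A : X → ℝ, (∀ x, 1 ≤ A x) ∧ ∀ E : X → ℝ, IsEVar H E → ∀ x, E x ≤ A x) := by
  have := hX.to_subtype
  simp only [lt_iSup_iff, exists_prop, hH.properlyConstrained_iff, true_and]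
  exact fun hatom => ⟨fun m Φ hΦ => hΦ.isProperConstraint_iff.2 hatom,
    exists_forall_isEVar_le (fun _ => hH.isProbabilityMeasure) hatom⟩

end Hypotheses

/-- a finitely constrained hypothesis is properly constrained iff
`sup_{P ∈ H} P({x}) > 0` for every `x ∈ X`; moreover, if `H` is properly constrained then
every constraint for `H` is proper, and there is `A : X → [1,∞)` dominating every
e-variable. -/
theorem statement5 {n : ℕ} {X : Set (EuclideanSpace ℝ (Fin n))}
    (hXc : IsClosed X) (hXne : X.Nonempty)
    (H : Set (Measure X)) (hHne : H.Nonempty) (hfc : FinitelyConstrained H) :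
    (ProperlyConstrained H ↔ ∀ x : X, 0 < ⨆ P ∈ H, P {x}) ∧
    (ProperlyConstrained H →
      (∀ (m : ℕ) (Φ : X → Fin m → ℝ), IsConstraint H Φ → IsProperConstraint H Φ) ∧
      ∃ A : X → ℝ, (∀ x, 1 ≤ A x) ∧ ∀ E : X → ℝ, IsEVar H E → ∀ x, E x ≤ A x) := by
  exact statement5_general hXne hfc
end

section
/- Let X be a nonempty closed subset of ℝⁿ, H a properly constrained hypothesis on X, and Φ : X → ℝᵐ a proper constraint for H. Then Φ is a minimal constraint (i.e. 0 lies in the interior of the convex hull of Φ(X) in ℝᵐ) if and only if the components Φ₁,…,Φₘ : X → ℝ are linearly independent in the real vector space of functions X → ℝ. -/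
open MeasureTheory Set ENNReal

/-!
As `0` lies in the convex hull of `Φ(X)`, the affine span of that hull is the linear span of `Φ(X)`.
Relative interior and interior agree when this span is all of `ℝᵐ`, and otherwise the interior is
empty, so minimality of a proper constraint says exactly that `Φ(X)` spans `ℝᵐ`. By duality, `Φ(X)`
fails to span iff a nonzero linear functional vanishes on it, which is a nontrivial linear relation
between the components of `Φ`.
-/

section Affine

variable {𝕜 V P : Type*} [Ring 𝕜] [AddCommGroup V] [Module 𝕜 V]

theorem intrinsicInterior_eq_interior_of_affineSpan_eq_top [TopologicalSpace P] [AddTorsor V P]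
    {s : Set P} (hs : affineSpan 𝕜 s = ⊤) : intrinsicInterior 𝕜 s = interior s := by
  have hopen : IsOpen (affineSpan 𝕜 s : Set P) := by
    simp only [hs, AffineSubspace.top_coe, isOpen_univ]
  refine Subset.antisymm ?_ interior_subset_intrinsicInterior
  exact (hopen.isOpenMap_subtype_val.image_interior_subset _).trans
    (interior_mono (image_preimage_subset _ _))

theorem coe_affineSpan_eq_coe_span_of_zero_mem {s : Set V} (h0 : (0 : V) ∈ affineSpan 𝕜 s) :
    (affineSpan 𝕜 s : Set V) = Submodule.span 𝕜 s := by
  rw [← affineSpan_insert_eq_affineSpan 𝕜 h0, affineSpan_insert_zero]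

theorem affineSpan_eq_top_iff_span_eq_top_of_zero_mem {s : Set V} (h0 : (0 : V) ∈ affineSpan 𝕜 s) :
    affineSpan 𝕜 s = ⊤ ↔ Submodule.span 𝕜 s = ⊤ := by
  rw [← AffineSubspace.coe_eq_univ_iff, coe_affineSpan_eq_coe_span_of_zero_mem h0,
    Submodule.coe_eq_univ]

end Affine

theorem mem_interior_iff_affineSpan_eq_top_of_mem_intrinsicInterior {V P : Type*}
    [NormedAddCommGroup V] [NormedSpace ℝ V] [MetricSpace P] [NormedAddTorsor V P]
    {s : Set P} {x : P} (hx : x ∈ intrinsicInterior ℝ s) :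
    x ∈ interior s ↔ affineSpan ℝ s = ⊤ := by
  refine ⟨fun hx' => ?_, fun hs => intrinsicInterior_eq_interior_of_affineSpan_eq_top hs ▸ hx⟩
  exact top_unique <| (isOpen_interior.affineSpan_eq_top ⟨x, hx'⟩).ge.trans
    (affineSpan_mono ℝ interior_subset)

theorem statement7_general {S ι : Type*} [Finite ι] (Φ : S → ι → ℝ)
    (h0 : (0 : ι → ℝ) ∈ intrinsicInterior ℝ (convexHull ℝ (range Φ))) :
    (0 : ι → ℝ) ∈ interior (convexHull ℝ (range Φ)) ↔
      LinearIndependent ℝ (fun (i : ι) (x : S) => Φ x i) := by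
  have := Fintype.ofFinite ι
  have h0_affineSpan : (0 : ι → ℝ) ∈ affineSpan ℝ (range Φ) :=
    convexHull_subset_affineSpan _ (intrinsicInterior_subset h0)
  calc (0 : ι → ℝ) ∈ interior (convexHull ℝ (range Φ))
    _ ↔ affineSpan ℝ (range Φ) = ⊤ := by
      rw [mem_interior_iff_affineSpan_eq_top_of_mem_intrinsicInterior h0,
        affineSpan_convexHull]
    _ ↔ Submodule.span ℝ (range Φ) = ⊤ :=
      affineSpan_eq_top_iff_span_eq_top_of_zero_mem h0_affineSpan
    _ ↔ LinearIndependent ℝ (fun (i : ι) (x : S) => Φ x i) :=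
      span_flip_eq_top_iff_linearIndependent (f := flip Φ)

/-- a proper constraint `Φ` is minimal (i.e. `0` lies in the interior of the
convex hull of `Φ(X)`) iff the components of `Φ` are linearly independent functions. -/
theorem statement7 {n m : ℕ} {X : Set (EuclideanSpace ℝ (Fin n))}
    (hXc : IsClosed X) (hXne : X.Nonempty)
    (H : Set (Measure X)) (hHne : H.Nonempty)
    (Φ : X → Fin m → ℝ) (hΦ : IsProperConstraint H Φ) :
    (0 : Fin m → ℝ) ∈ interior (convexHull ℝ (Set.range Φ)) ↔
      LinearIndependent ℝ (fun i : Fin m => (fun x : X => Φ x i)) :=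
  statement7_general Φ hΦ.2
end

section
/- Let X be a nonempty closed subset of ℝⁿ and H a properly constrained hypothesis on X. If Φ : X → ℝᵐ and Φ' : X → ℝᵐ' are both constraints for H, then Span Φ = Span Φ', where Span Φ = {x ↦ λ·Φ(x) : λ ∈ ℝᵐ} is the linear span of the components of Φ in the vector space of real-valued functions on X. -/
open MeasureTheory Set ENNReal

/-!
Replace probability measures by nonnegative weights `w` with finite support, a weight of total mass
one being a finitely supported probability measure. Every continuous function is integrable against
it, so all constraints `Φ` of `H` have the same nonnegative relations `∑ x, w x • Φ x = 0`. If `Φ`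
is proper, then `-Φ x` lies in the cone generated by the values of `Φ`, so each nonnegative weight
can be completed to a relation; this property depends only on the set of relations, hence passes to
every constraint of `H`. Completing the positive and the negative part of a signed relation by the
same weight exhibits it as a difference of nonnegative ones. Thus all constraints have the same
signed relations, and the annihilator of these in the functions on `X` is the span of the components
of `Φ`, as this span is finite-dimensional.
-/

open Finsupp Submodule
open scoped NNReal Topology

section LinearAlgebra

variable {ι κ α V W R K : Type*}

lemma exists_pos_neg_smul_mem_of_zero_mem_intrinsicInterior [AddCommGroup V] [Module ℝ V]
    [TopologicalSpace V] [ContinuousSMul ℝ V] {s : Set V} (h : 0 ∈ intrinsicInterior ℝ s)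
    {x : V} (hx : x ∈ affineSpan ℝ s) : ∃ ε > (0 : ℝ), (-ε) • x ∈ s := by
  have hline_mem (t : ℝ) : (-t) • x ∈ affineSpan ℝ s := by
    simpa [AffineMap.lineMap_apply] using
      AffineMap.lineMap_mem (-t) (subset_affineSpan ℝ s (intrinsicInterior_subset h)) hx
  let line (t : ℝ) : affineSpan ℝ s := ⟨(-t) • x, hline_mem t⟩
  have hline : Continuous line := by fun_prop
  obtain ⟨origin, horigin, horigin_eq⟩ := h
  have hline_zero : line 0 = origin := Subtype.ext (by simp [line, horigin_eq])
  have hnear : ∀ᶠ t in 𝓝[>] (0 : ℝ), (-t) • x ∈ s :=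
    (hline.tendsto' 0 origin hline_zero).mono_left nhdsWithin_le_nhds
      |>.eventually (mem_interior_iff_mem_nhds.1 horigin)
  obtain ⟨ε, hεs, hε⟩ := (hnear.and self_mem_nhdsWithin).exists
  exact ⟨ε, hε, hεs⟩

lemma convexHull_subset_span_nnreal [AddCommGroup V] [Module ℝ V] (s : Set V) :
    convexHull ℝ s ⊆ span ℝ≥0 s :=
  convexHull_min subset_span fun _ hx _ hy a b ha hb _ ↦
    add_mem ((span ℝ≥0 s).smul_mem ⟨a, ha⟩ hx) ((span ℝ≥0 s).smul_mem ⟨b, hb⟩ hy)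

lemma neg_mem_span_nnreal_of_zero_mem_intrinsicInterior [AddCommGroup V] [Module ℝ V]
    [TopologicalSpace V] [ContinuousSMul ℝ V] {s : Set V}
    (h : 0 ∈ intrinsicInterior ℝ (convexHull ℝ s)) {x : V} (hx : x ∈ s) :
    -x ∈ span ℝ≥0 s := by
  obtain ⟨ε, hε, hmem⟩ := exists_pos_neg_smul_mem_of_zero_mem_intrinsicInterior h
    (subset_affineSpan ℝ _ (subset_convexHull ℝ s hx))
  lift ε to ℝ≥0 using hε.le
  have hscaled := (span ℝ≥0 s).smul_mem ε⁻¹ (convexHull_subset_span_nnreal s hmem)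
  rwa [neg_smul, ← NNReal.smul_def, smul_neg, inv_smul_smul₀ (NNReal.coe_pos.1 hε).ne'] at hscaled

lemma neg_mem_span_of_forall_neg_mem_span [Semiring R] [AddCommGroup V] [Module R V] {s : Set V}
    (h : ∀ x ∈ s, -x ∈ span R s) {y : V} (hy : y ∈ span R s) : -y ∈ span R s := by
  induction hy using span_induction with
  | mem x hx => exact h x hx
  | zero => simp
  | add x y _ _ hx hy => rw [neg_add]; exact add_mem hx hy
  | smul a x _ hx => rw [← smul_neg]; exact smul_mem _ a hx

lemma exists_linearCombination_add_eq_zero_of_neg_mem_span [Semiring R] [AddCommGroup V]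
    [Module R V] {f : α → V} (h : ∀ x, -f x ∈ span R (range f)) (p : α →₀ R) :
    ∃ q, linearCombination R f (p + q) = 0 := by
  have hneg : -linearCombination R f p ∈ span R (range f) :=
    neg_mem_span_of_forall_neg_mem_span (forall_mem_range.2 h)
      (mem_span_range_iff_exists_finsupp.2 ⟨p, rfl⟩)
  obtain ⟨q, hq⟩ := mem_span_range_iff_exists_finsupp.1 hneg
  exact ⟨q, by rw [map_add, linearCombination_apply R q, hq, add_neg_cancel]⟩

lemma linearCombination_real_eq_sub [AddCommGroup V] [Module ℝ V] (f : α → V) (v : α →₀ ℝ) :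
    linearCombination ℝ f v =
      linearCombination ℝ≥0 f (v.mapRange Real.toNNReal Real.toNNReal_zero) -
        linearCombination ℝ≥0 f ((-v).mapRange Real.toNNReal Real.toNNReal_zero) := by
  simp only [linearCombination_apply]
  rw [sum_mapRange_index (by simp), sum_mapRange_index (by simp), sum_neg_index (by simp),
    ← Finsupp.sum_sub]
  refine sum_congr fun x _ ↦ ?_
  rw [NNReal.smul_def, NNReal.smul_def, ← sub_smul, Real.coe_toNNReal', Real.coe_toNNReal',
    max_zero_sub_max_neg_zero_eq_self]

lemma ker_linearCombination_real_le_of_nnreal [AddCommGroup V] [Module ℝ V] [AddCommGroup W]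
    [Module ℝ W] {f : α → V} {g : α → W}
    (hf : ∀ p : α →₀ ℝ≥0, ∃ q, linearCombination ℝ≥0 f (p + q) = 0)
    (hker : LinearMap.ker (linearCombination ℝ≥0 f) ≤ LinearMap.ker (linearCombination ℝ≥0 g)) :
    LinearMap.ker (linearCombination ℝ f) ≤ LinearMap.ker (linearCombination ℝ g) := by
  intro v hv
  rw [LinearMap.mem_ker, linearCombination_real_eq_sub, sub_eq_zero] at hv ⊢
  set p := v.mapRange Real.toNNReal Real.toNNReal_zero
  set n := (-v).mapRange Real.toNNReal Real.toNNReal_zero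
  obtain ⟨q, hpq⟩ := hf p
  have hnq : linearCombination ℝ≥0 f (n + q) = 0 := by rw [← hpq, map_add, map_add, hv]
  have hg : linearCombination ℝ≥0 g (p + q) = linearCombination ℝ≥0 g (n + q) :=
    (hker hpq).trans (hker hnq).symm
  exact add_right_cancel (by rwa [map_add, map_add] at hg)

lemma span_range_coord_le_of_ker_linearCombination_le [Field K] [Finite ι] {f : α → ι → K}
    {g : α → κ → K}
    (h : LinearMap.ker (linearCombination K f) ≤ LinearMap.ker (linearCombination K g)) :
    span K (range fun j x ↦ g x j) ≤ span K (range fun i x ↦ f x i) := by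
  rw [span_le]
  rintro _ ⟨j, rfl⟩
  let e := Finsupp.llift K K K α
  have hcoord_f (i : ι) (v : α →₀ K) : e (f · i) v = linearCombination K f v i := by
    simp [e, linearCombination_apply, Finsupp.sum]
  have hcoord_g (v : α →₀ K) : e (g · j) v = linearCombination K g v j := by
    simp [e, linearCombination_apply, Finsupp.sum]
  have hdual : e (g · j) ∈ span K (range fun i ↦ e (f · i)) := by
    refine mem_span_of_iInf_ker_le_ker fun v hv ↦ ?_
    simp only [mem_iInf, LinearMap.mem_ker, hcoord_f] at hv
    rw [LinearMap.mem_ker, hcoord_g, LinearMap.mem_ker.1 (h (funext hv)), Pi.zero_apply]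
  rwa [range_comp' e, ← LinearEquiv.coe_coe, ← map_span, mem_map_equiv, LinearEquiv.coe_coe,
    e.symm_apply_apply] at hdual

end LinearAlgebra

section AtomicMeasure

variable {α E : Type*} [MeasurableSpace α] [NormedAddCommGroup E]

/-- The finitely supported measure `∑ x, w x • δ_x` with an atom of mass `w x` at each point `x`. -/
noncomputable def atomicMeasure (w : α →₀ ℝ≥0) : Measure α :=
  ∑ x ∈ w.support, w x • Measure.dirac x

lemma isProbabilityMeasure_atomicMeasure {w : α →₀ ℝ≥0} (hw : w.degree = 1) :
    IsProbabilityMeasure (atomicMeasure w) := by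
  refine ⟨?_⟩
  calc atomicMeasure w univ = ∑ x ∈ w.support, (w x : ℝ≥0∞) := by simp [atomicMeasure]
    _ = (w.degree : ℝ≥0∞) := by rw [degree_apply, ENNReal.ofNNReal_finsetSum]
    _ = 1 := by rw [hw, ENNReal.coe_one]

lemma integrable_atomicMeasure {f : α → E} (hf : StronglyMeasurable f) (w : α →₀ ℝ≥0) :
    Integrable f (atomicMeasure w) :=
  integrable_finsetSum_measure.2 fun _ _ ↦
    (integrable_dirac' hf enorm_lt_top).smul_measure_nnreal

lemma integral_atomicMeasure [NormedSpace ℝ E] [CompleteSpace E] {f : α → E}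
    (hf : StronglyMeasurable f) (w : α →₀ ℝ≥0) :
    ∫ x, f x ∂atomicMeasure w = linearCombination ℝ≥0 f w := by
  rw [atomicMeasure,
    integral_finsetSum_measure (integrable_finsetSum_measure.1 (integrable_atomicMeasure hf w))]
  simp only [integral_smul_nnreal_measure, integral_dirac' f _ hf, linearCombination_apply,
    Finsupp.sum]

end AtomicMeasure

section Constraint

variable {α : Type*} [TopologicalSpace α] [MeasurableSpace α] [OpensMeasurableSpace α] {X : Set α}
  {m m' : ℕ} {H : Set (Measure X)} {Φ : X → Fin m → ℝ} {Φ' : X → Fin m' → ℝ}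

lemma memPPhi_atomicMeasure (hΦ : Continuous Φ) (w : X →₀ ℝ≥0) :
    MemPPhi (atomicMeasure w) Φ := by
  have hnorm : Continuous fun x ↦ ∑ i, |Φ x i| := by fun_prop
  exact (integrable_atomicMeasure hnorm.stronglyMeasurable w).lintegral_lt_top

namespace IsConstraint

lemma atomicMeasure_mem_iff (hΦ : IsConstraint H Φ) {w : X →₀ ℝ≥0} (hw : w.degree = 1) :
    atomicMeasure w ∈ H ↔ linearCombination ℝ≥0 Φ w = 0 := by
  rw [hΦ.2, mem_ofPred_eq, integral_atomicMeasure hΦ.1.stronglyMeasurable]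
  simp only [isProbabilityMeasure_atomicMeasure hw, memPPhi_atomicMeasure hΦ.1 w, true_and]

lemma ker_linearCombination_nnreal_eq (hΦ : IsConstraint H Φ) (hΦ' : IsConstraint H Φ') :
    LinearMap.ker (linearCombination ℝ≥0 Φ) = LinearMap.ker (linearCombination ℝ≥0 Φ') := by
  ext w
  obtain rfl | hw := eq_or_ne w 0
  · simp
  have hmass : w.degree ≠ 0 := mt (degree_eq_zero_iff w).1 hw
  have hnormalized : (w.degree⁻¹ • w).degree = 1 := by
    rw [degree_apply, support_smul_eq (inv_ne_zero hmass)]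
    simp only [Finsupp.smul_apply, smul_eq_mul]
    rw [← Finset.mul_sum, ← degree_apply, inv_mul_cancel₀ hmass]
  have hscale {k : ℕ} (Ψ : X → Fin k → ℝ) :
      linearCombination ℝ≥0 Ψ (w.degree⁻¹ • w) = 0 ↔ linearCombination ℝ≥0 Ψ w = 0 := by
    rw [map_smul, smul_eq_zero_iff_right (inv_ne_zero hmass)]
  rw [LinearMap.mem_ker, LinearMap.mem_ker, ← hscale, ← hscale,
    ← hΦ.atomicMeasure_mem_iff hnormalized, hΦ'.atomicMeasure_mem_iff hnormalized]

lemma span_coord_le (hΦ : IsConstraint H Φ) (hΦ' : IsConstraint H Φ')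
    (hbalance : ∀ p : X →₀ ℝ≥0, ∃ q, linearCombination ℝ≥0 Φ (p + q) = 0) :
    span ℝ (range fun j x ↦ Φ' x j) ≤ span ℝ (range fun i x ↦ Φ x i) :=
  span_range_coord_le_of_ker_linearCombination_le <|
    ker_linearCombination_real_le_of_nnreal hbalance
      (hΦ.ker_linearCombination_nnreal_eq hΦ').le

end IsConstraint

lemma ProperlyConstrained.exists_linearCombination_add_eq_zero (hH : ProperlyConstrained H)
    (hΦ : IsConstraint H Φ) (p : X →₀ ℝ≥0) : ∃ q, linearCombination ℝ≥0 Φ (p + q) = 0 := by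
  obtain ⟨k, Ψ, hΨ, hzero⟩ := hH
  obtain ⟨q, hq⟩ := exists_linearCombination_add_eq_zero_of_neg_mem_span
    (fun x ↦ neg_mem_span_nnreal_of_zero_mem_intrinsicInterior hzero (mem_range_self x)) p
  exact ⟨q, (hΨ.ker_linearCombination_nnreal_eq hΦ).le hq⟩

end Constraint

theorem statement10_general {α : Type*} [TopologicalSpace α] [MeasurableSpace α]
    [OpensMeasurableSpace α] {m m' : ℕ} {X : Set α} {H : Set (Measure X)}
    (hH : ProperlyConstrained H) {Φ : X → Fin m → ℝ} {Φ' : X → Fin m' → ℝ}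
    (hΦ : IsConstraint H Φ) (hΦ' : IsConstraint H Φ') :
    span ℝ (range fun i x ↦ Φ x i) = span ℝ (range fun i x ↦ Φ' x i) :=
  le_antisymm (hΦ'.span_coord_le hΦ (hH.exists_linearCombination_add_eq_zero hΦ'))
    (hΦ.span_coord_le hΦ' (hH.exists_linearCombination_add_eq_zero hΦ))

/-- any two constraints of a properly constrained hypothesis have the same
linear span (of their components) in the space of real functions on `X`. -/
theorem statement10 {n m m' : ℕ} {X : Set (EuclideanSpace ℝ (Fin n))}
    (hXc : IsClosed X) (hXne : X.Nonempty)
    (H : Set (Measure X)) (hHne : H.Nonempty) (hpc : ProperlyConstrained H)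
    (Φ : X → Fin m → ℝ) (Φ' : X → Fin m' → ℝ)
    (hΦ : IsConstraint H Φ) (hΦ' : IsConstraint H Φ') :
    Submodule.span ℝ (Set.range fun i : Fin m => fun x : X => Φ x i) =
      Submodule.span ℝ (Set.range fun i : Fin m' => fun x : X => Φ' x i) :=
  statement10_general hpc hΦ hΦ'
end
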